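/- Let 1/2 < s < 1. For any smooth compactly supported function f on ℝ³₊, the mixed norm ‖‖f‖_{L^∞(ℝ₊, dx₃)}‖_{L^{2/s}(ℝ², dx_h)} is bounded, up to a universal constant, by (‖f‖_{L²}‖∂₂f‖_{L²} + ‖∂₁f‖_{L²}‖∂₁∂₂f‖_{L²})^{(1-s)/2} · ‖f‖_{L²}^{(2s-1)/2} · ‖∂₃f‖_{L²}^{1/2}. -/

import Mathlib

open MeasureTheory

def H3 : Set (Fin 3 → ℝ) := {x | 0 < x 2}

noncomputable def pd (i : Fin 3) (f : (Fin 3 → ℝ) → ℝ) : (Fin 3 → ℝ) → ℝ :=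
  fun x => fderiv ℝ f x (Pi.single i 1)

noncomputable def L2 (f : (Fin 3 → ℝ) → ℝ) : ℝ :=
  Real.sqrt (∫ x in H3, (f x) ^ 2)

/-- Embed horizontal variables `y = (x₁,x₂)` and vertical variable `t = x₃` into `ℝ³`. -/
def emb (y : Fin 2 → ℝ) (t : ℝ) : Fin 3 → ℝ := ![y 0, y 1, t]

/-!
Everything rests on the trace inequality `‖g v‖² ≤ 2 ∫_{u > v} ‖g‖ ‖g'‖`. Let `A y` and `B y` be
the `L²` norms of `f` and `∂₃f` on the vertical half-line over `y`. In `x₃` the inequality gives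
`(sup_t |f (y, t)|)² ≤ 2 A y B y`. Applied in `x₂` and then in `x₁`, it bounds `A y ^ 2` by twice
the square root of `4 (‖f‖ ‖∂₁f‖) (‖∂₂f‖ ‖∂₁∂₂f‖)`, so AM-GM on the regrouped product
`(‖f‖ ‖∂₂f‖) (‖∂₁f‖ ‖∂₁∂₂f‖)` yields `A y ^ 2 ≤ 2 K` with `K = ‖f‖ ‖∂₂f‖ + ‖∂₁f‖ ‖∂₁∂₂f‖`.
Interpolating `A` between this uniform bound and `∫ A² = ‖f‖²`, and using `∫ B² = ‖∂₃f‖²`,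
Hölder's inequality in `y` gives the `L^{2/s}` bound. In the code the coordinates `x₁, x₂, x₃` have
the indices `0, 1, 2`.
-/

open Set Function
open scoped ENNReal

theorem ennreal_four_mul_le_add_sq (a b : ℝ≥0∞) : 4 * (a * b) ≤ (a + b) ^ 2 := by
  wlog h : a ≤ b generalizing a b
  · rw [mul_comm a, add_comm]
    exact this b a (le_of_not_ge h)
  obtain ⟨c, rfl⟩ := exists_add_of_le h
  calc 4 * (a * (a + c)) ≤ 4 * (a * (a + c)) + c ^ 2 := le_self_add
    _ = (a + (a + c)) ^ 2 := by ring

section Lebesgue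

variable {X Y E E' : Type*} [MeasurableSpace X] [MeasurableSpace Y]
  [NormedAddCommGroup E] [NormedAddCommGroup E'] {μ : Measure X}

theorem integral_toReal_le_toReal_lintegral {g : X → ℝ≥0∞} (hg : ∫⁻ x, g x ∂μ ≠ ∞) :
    ∫ x, (g x).toReal ∂μ ≤ (∫⁻ x, g x ∂μ).toReal :=
  calc ∫ x, (g x).toReal ∂μ ≤ (∫⁻ x, .ofReal ‖(g x).toReal‖ ∂μ).toReal :=
        (Real.le_norm_self _).trans (norm_integral_le_lintegral_norm _)
    _ ≤ (∫⁻ x, g x ∂μ).toReal := by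
        refine ENNReal.toReal_mono hg (lintegral_mono fun x => ?_)
        rw [Real.norm_of_nonneg ENNReal.toReal_nonneg]
        exact ENNReal.ofReal_toReal_le

theorem rpow_integral_iSup_norm_rpow_le {ι : Sort*} {g : X → ι → E} {p q R : ℝ} (hq : 0 < q)
    (hR : 0 ≤ R) (h : (∫⁻ x, (⨆ i, ‖g x i‖ₑ) ^ p ∂μ) ^ q ≤ .ofReal R) :
    (∫ x, (⨆ i, ‖g x i‖) ^ p ∂μ) ^ q ≤ R := by
  have hsup (x : X) : (⨆ i, ‖g x i‖) ^ p = ((⨆ i, ‖g x i‖ₑ) ^ p).toReal := by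
    simp [← ENNReal.toReal_rpow, ENNReal.toReal_iSup]
  have hfinite : ∫⁻ x, (⨆ i, ‖g x i‖ₑ) ^ p ∂μ ≠ ∞ := by
    intro htop
    simp [htop, ENNReal.top_rpow_of_pos hq] at h
  calc (∫ x, (⨆ i, ‖g x i‖) ^ p ∂μ) ^ q ≤ (∫⁻ x, (⨆ i, ‖g x i‖ₑ) ^ p ∂μ).toReal ^ q := by
        simp only [hsup]
        gcongr
        exact integral_toReal_le_toReal_lintegral hfinite
    _ ≤ R := by
        rw [ENNReal.toReal_rpow]
        exact ENNReal.toReal_le_of_le_ofReal hR h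

theorem eLpNorm_two_sq (f : X → E) : eLpNorm f 2 μ ^ 2 = ∫⁻ x, ‖f x‖ₑ ^ 2 ∂μ := by
  simpa using eLpNorm_nnreal_pow_eq_lintegral (f := f) (μ := μ) (two_ne_zero (α := NNReal))

theorem lintegral_enorm_mul_enorm_le {f : X → E} {g : X → E'} (hf : AEStronglyMeasurable f μ)
    (hg : AEStronglyMeasurable g μ) :
    ∫⁻ x, ‖f x‖ₑ * ‖g x‖ₑ ∂μ ≤ eLpNorm f 2 μ * eLpNorm g 2 μ := by
  simpa [eLpNorm_eq_lintegral_rpow_enorm_toReal] using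
    ENNReal.lintegral_mul_le_Lp_mul_Lq μ Real.HolderConjugate.two_two hf.enorm hg.enorm

theorem aemeasurable_eLpNorm_two {ν : Measure Y} [SFinite ν] {G : X → Y → E}
    (hG : AEStronglyMeasurable (uncurry G) (μ.prod ν)) :
    AEMeasurable (fun x => eLpNorm (G x) 2 ν) μ := by
  simp only [eLpNorm_eq_lintegral_rpow_enorm_toReal two_ne_zero ENNReal.ofNat_ne_top]
  exact ((hG.enorm.pow_const _).lintegral_prod_right').pow_const _

theorem lintegral_eLpNorm_two_sq {ν : Measure Y} [SFinite ν] {G : X → Y → E}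
    (hG : AEStronglyMeasurable (uncurry G) (μ.prod ν)) :
    ∫⁻ x, eLpNorm (G x) 2 ν ^ 2 ∂μ = eLpNorm (uncurry G) 2 (μ.prod ν) ^ 2 := by
  simp only [eLpNorm_two_sq]
  exact (lintegral_prod _ (hG.enorm.pow_const 2)).symm

variable {A B φ : X → ℝ≥0∞} {M : ℝ≥0∞}

-- Split `A ^ r = (A ^ 2) ^ (r - 1) * (A ^ 2) ^ (1 - r / 2)`, bound the first factor by
-- `M ^ (r - 1)` and apply Hölder with weights `1 - r / 2` and `r / 2` to the rest.
theorem lintegral_rpow_mul_rpow_le_of_sq_le {r : ℝ} (hr : 1 ≤ r) (hr' : r ≤ 2)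
    (hA : AEMeasurable A μ) (hB : AEMeasurable B μ) (hM : ∀ x, A x ^ 2 ≤ M) :
    ∫⁻ x, A x ^ r * B x ^ r ∂μ ≤
      M ^ (r - 1) * ((∫⁻ x, A x ^ 2 ∂μ) ^ (1 - r / 2) * (∫⁻ x, B x ^ 2 ∂μ) ^ (r / 2)) := by
  have hA_sq : AEMeasurable (fun x => A x ^ 2) μ := hA.pow_const 2
  have hB_sq : AEMeasurable (fun x => B x ^ 2) μ := hB.pow_const 2
  calc ∫⁻ x, A x ^ r * B x ^ r ∂μ
      ≤ ∫⁻ x, M ^ (r - 1) * ((A x ^ 2) ^ (1 - r / 2) * (B x ^ 2) ^ (r / 2)) ∂μ := by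
        refine lintegral_mono fun x => ?_
        have hA_split : A x ^ r = (A x ^ 2) ^ (r - 1) * (A x ^ 2) ^ (1 - r / 2) := by
          rw [← ENNReal.rpow_add_of_nonneg _ _ (by linarith) (by linarith),
            ← ENNReal.rpow_natCast_mul]
          push_cast
          ring_nf
        have hB_eq : B x ^ r = (B x ^ 2) ^ (r / 2) := by
          rw [← ENNReal.rpow_natCast_mul]
          push_cast
          ring_nf
        rw [hA_split, hB_eq, mul_assoc]
        gcongr
        exact hM x
    _ = M ^ (r - 1) * ∫⁻ x, (A x ^ 2) ^ (1 - r / 2) * (B x ^ 2) ^ (r / 2) ∂μ :=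
        lintegral_const_mul'' _ ((hA_sq.pow_const _).fun_mul (hB_sq.pow_const _))
    _ ≤ _ := by
        gcongr
        exact ENNReal.lintegral_mul_norm_pow_le hA_sq hB_sq
          (by linarith) (by linarith) (by ring)

theorem lintegral_rpow_two_div_le_of_sq_le {c : ℝ≥0∞} {s : ℝ} (hs : 1 / 2 ≤ s) (hs' : s ≤ 1)
    (hA : AEMeasurable A μ) (hB : AEMeasurable B μ) (hM : ∀ x, A x ^ 2 ≤ M)
    (hφ : ∀ x, φ x ^ 2 ≤ c * (A x * B x)) :
    (∫⁻ x, φ x ^ (2 / s) ∂μ) ^ (s / 2) ≤ c ^ (1 / 2 : ℝ) * M ^ ((1 - s) / 2)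
      * (∫⁻ x, A x ^ 2 ∂μ) ^ ((2 * s - 1) / 4) * (∫⁻ x, B x ^ 2 ∂μ) ^ (1 / 4 : ℝ) := by
  have hs0 : 0 < s := by linarith
  have hpointwise (x : X) : φ x ^ (2 / s) ≤ c ^ (1 / s) * (A x ^ (1 / s) * B x ^ (1 / s)) :=
    calc φ x ^ (2 / s) = (φ x ^ 2) ^ (1 / s) := by
          rw [← ENNReal.rpow_natCast_mul, Nat.cast_ofNat, mul_one_div]
      _ ≤ (c * (A x * B x)) ^ (1 / s) := ENNReal.rpow_le_rpow (hφ x) (by positivity)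
      _ = c ^ (1 / s) * (A x ^ (1 / s) * B x ^ (1 / s)) := by
          simp only [ENNReal.mul_rpow_of_nonneg _ _ (one_div_pos.2 hs0).le]
  have hintegral : ∫⁻ x, φ x ^ (2 / s) ∂μ ≤ c ^ (1 / s) * (M ^ (1 / s - 1) *
      ((∫⁻ x, A x ^ 2 ∂μ) ^ (1 - 1 / s / 2) * (∫⁻ x, B x ^ 2 ∂μ) ^ (1 / s / 2))) := by
    grw [lintegral_mono hpointwise,
      lintegral_const_mul'' _ ((hA.pow_const _).fun_mul (hB.pow_const _)),
      lintegral_rpow_mul_rpow_le_of_sq_le (one_le_one_div hs0 hs')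
        ((one_div_le two_pos hs0).1 hs) hA hB hM]
  grw [hintegral]
  simp only [ENNReal.mul_rpow_of_nonneg _ _ (half_pos hs0).le, ← ENNReal.rpow_mul, ← mul_assoc]
  rw [show 1 / s * (s / 2) = 1 / 2 by field_simp,
    show (1 / s - 1) * (s / 2) = (1 - s) / 2 by field_simp,
    show (1 - 1 / s / 2) * (s / 2) = (2 * s - 1) / 4 by field_simp; ring,
    show 1 / s / 2 * (s / 2) = 1 / 4 by field_simp; norm_num]

end Lebesgue

section Slices

variable {X E : Type*} [MeasurableSpace X] [NormedAddCommGroup E] [InnerProductSpace ℝ E]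
  {μ : Measure X}

theorem enorm_sq_le_two_mul_lintegral_Ioi {g : ℝ → E} (hg : ContDiff ℝ 1 g)
    (hsupp : HasCompactSupport g) (v : ℝ) :
    ‖g v‖ₑ ^ 2 ≤ 2 * ∫⁻ u in Ioi v, ‖g u‖ₑ * ‖deriv g u‖ₑ := by
  have hderiv (u : ℝ) : deriv (‖g ·‖ ^ 2) u = 2 * inner ℝ (g u) (deriv g u) :=
    (hg.differentiable one_ne_zero u).hasDerivAt.norm_sq.deriv
  have hsupp_sq : HasCompactSupport (‖g ·‖ ^ 2) :=
    hsupp.comp_left (g := fun z => ‖z‖ ^ 2) (by simp)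
  calc ‖g v‖ₑ ^ 2 = ‖∫ u in Ioi v, deriv (‖g ·‖ ^ 2) u‖ₑ := by
        rw [hsupp_sq.integral_Ioi_deriv_eq (hg.norm_sq ℝ)]
        simp
    _ ≤ ∫⁻ u in Ioi v, ‖deriv (‖g ·‖ ^ 2) u‖ₑ := enorm_integral_le_lintegral_enorm _
    _ ≤ ∫⁻ u in Ioi v, 2 * (‖g u‖ₑ * ‖deriv g u‖ₑ) := by
        refine lintegral_mono fun u => ?_
        rw [hderiv, enorm_mul]
        gcongr
        · simp [← ofReal_norm]
        · simpa [← ofReal_norm, ENNReal.ofReal_mul] using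
            ENNReal.ofReal_le_ofReal (norm_inner_le_norm (𝕜 := ℝ) (g u) (deriv g u))
    _ = _ := lintegral_const_mul' _ _ (by finiteness)

theorem iSup_Ioi_enorm_sq_le {g : ℝ → E} (hg : ContDiff ℝ 1 g) (hsupp : HasCompactSupport g)
    (a : ℝ) :
    (⨆ t : Ioi a, ‖g t‖ₑ) ^ 2 ≤ 2 * (eLpNorm g 2 (volume.restrict (Ioi a)) *
      eLpNorm (deriv g) 2 (volume.restrict (Ioi a))) := by
  rw [ENNReal.iSup_pow_of_ne_zero two_ne_zero]
  refine iSup_le fun t => ?_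
  calc ‖g t‖ₑ ^ 2 ≤ 2 * ∫⁻ u in Ioi (t : ℝ), ‖g u‖ₑ * ‖deriv g u‖ₑ :=
        enorm_sq_le_two_mul_lintegral_Ioi hg hsupp t
    _ ≤ 2 * ∫⁻ u in Ioi a, ‖g u‖ₑ * ‖deriv g u‖ₑ := by
        gcongr
        exact t.2.le
    _ ≤ _ := by
        gcongr
        exact lintegral_enorm_mul_enorm_le hg.continuous.aestronglyMeasurable
          (hg.continuous_deriv le_rfl).aestronglyMeasurable

variable {G : X → ℝ → E}

theorem eLpNorm_slice_sq_le (hG : ∀ x, ContDiff ℝ 1 (G x)) (hsupp : ∀ x, HasCompactSupport (G x))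
    (hG_meas : AEStronglyMeasurable (uncurry G) (μ.prod volume))
    (hG'_meas : AEStronglyMeasurable (uncurry fun x => deriv (G x)) (μ.prod volume)) (v : ℝ) :
    eLpNorm (fun x => G x v) 2 μ ^ 2 ≤ 2 * (eLpNorm (uncurry G) 2 (μ.prod volume) *
      eLpNorm (uncurry fun x => deriv (G x)) 2 (μ.prod volume)) :=
  calc eLpNorm (fun x => G x v) 2 μ ^ 2 = ∫⁻ x, ‖G x v‖ₑ ^ 2 ∂μ := eLpNorm_two_sq _
    _ ≤ ∫⁻ x, 2 * (∫⁻ u, ‖G x u‖ₑ * ‖deriv (G x) u‖ₑ) ∂μ := by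
        refine lintegral_mono fun x => ?_
        grw [enorm_sq_le_two_mul_lintegral_Ioi (hG x) (hsupp x) v, setLIntegral_le_lintegral]
    _ = 2 * ∫⁻ p, ‖uncurry G p‖ₑ * ‖uncurry (fun x => deriv (G x)) p‖ₑ ∂(μ.prod volume) := by
        rw [lintegral_const_mul' _ _ (by finiteness),
          lintegral_prod _ (hG_meas.enorm.fun_mul hG'_meas.enorm)]
        rfl
    _ ≤ _ := by
        gcongr
        exact lintegral_enorm_mul_enorm_le hG_meas hG'_meas

theorem lintegral_iSup_Ioi_enorm_rpow_le {a s : ℝ} {M : ℝ≥0∞} (hs : 1 / 2 ≤ s) (hs' : s ≤ 1)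
    (hG : ∀ x, ContDiff ℝ 1 (G x)) (hsupp : ∀ x, HasCompactSupport (G x))
    (hG_meas : AEStronglyMeasurable (uncurry G) (μ.prod (volume.restrict (Ioi a))))
    (hG'_meas : AEStronglyMeasurable (uncurry fun x => deriv (G x))
      (μ.prod (volume.restrict (Ioi a))))
    (hM : ∀ x, eLpNorm (G x) 2 (volume.restrict (Ioi a)) ^ 2 ≤ M) :
    (∫⁻ x, (⨆ t : Ioi a, ‖G x t‖ₑ) ^ (2 / s) ∂μ) ^ (s / 2) ≤
      2 ^ (1 / 2 : ℝ) * M ^ ((1 - s) / 2)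
        * eLpNorm (uncurry G) 2 (μ.prod (volume.restrict (Ioi a))) ^ ((2 * s - 1) / 2)
        * eLpNorm (uncurry fun x => deriv (G x)) 2
            (μ.prod (volume.restrict (Ioi a))) ^ (1 / 2 : ℝ) := by
  have h := lintegral_rpow_two_div_le_of_sq_le hs hs' (aemeasurable_eLpNorm_two hG_meas)
    (aemeasurable_eLpNorm_two hG'_meas) hM fun x => iSup_Ioi_enorm_sq_le (hG x) (hsupp x) a
  rw [lintegral_eLpNorm_two_sq hG_meas, lintegral_eLpNorm_two_sq hG'_meas,
    ← ENNReal.rpow_natCast_mul, ← ENNReal.rpow_natCast_mul, Nat.cast_ofNat,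
    show 2 * ((2 * s - 1) / 4) = (2 * s - 1) / 2 by ring,
    show 2 * (1 / 4 : ℝ) = 1 / 2 by norm_num] at h
  exact h

end Slices

section CoordinateLines

variable {ι E X : Type*} [DecidableEq ι] [NormedAddCommGroup E] {f : (ι → ℝ) → E}

theorem aestronglyMeasurable_comp_update [Countable ι] [MeasurableSpace X] (hf : Continuous f)
    {b : X → ι → ℝ} (hb : Measurable b) (i : ι) (μ : Measure (X × ℝ)) :
    AEStronglyMeasurable (fun p : X × ℝ => f (update (b p.1) i p.2)) μ :=
  (hf.stronglyMeasurable.comp_measurable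
    (measurable_update'.comp (hb.prodMap measurable_id))).aestronglyMeasurable

theorem deriv_comp_update [Finite ι] [NormedSpace ℝ E] (hf : Differentiable ℝ f) (x : ι → ℝ)
    (i : ι) :
    deriv (fun u => f (update x i u)) = fun u => fderiv ℝ f (update x i u) (Pi.single i 1) :=
  have := Fintype.ofFinite ι
  funext fun u => ((hf _).hasFDerivAt.comp_hasDerivAt u (hasDerivAt_update x i u)).deriv

variable [Fintype ι] [MeasurableSpace X] [InnerProductSpace ℝ E] {μ : Measure X} {b : X → ι → ℝ}

theorem eLpNorm_comp_update_sq_le (hf : ContDiff ℝ 1 f) (hsupp : HasCompactSupport f)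
    (hb : Measurable b) (i : ι) (v : ℝ) :
    eLpNorm (fun x => f (update (b x) i v)) 2 μ ^ 2 ≤
      2 * (eLpNorm (fun p : X × ℝ => f (update (b p.1) i p.2)) 2 (μ.prod volume) *
        eLpNorm (fun p : X × ℝ => fderiv ℝ f (update (b p.1) i p.2) (Pi.single i 1)) 2
          (μ.prod volume)) := by
  have hderiv (x : X) := deriv_comp_update (hf.differentiable one_ne_zero) (b x) i
  have h := eLpNorm_slice_sq_le (μ := μ) (G := fun x u => f (update (b x) i u))
    (fun x => hf.comp (contDiff_update 1 (b x) i))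
    (fun x => hsupp.comp_isClosedEmbedding (isClosedEmbedding_update (b x) i))
    (aestronglyMeasurable_comp_update hf.continuous hb i _)
  simp only [hderiv] at h
  exact h (aestronglyMeasurable_comp_update ((hf.continuous_fderiv one_ne_zero).clm_apply
    continuous_const) hb i _) v

theorem lintegral_iSup_Ioi_enorm_comp_update_rpow_le (hf : ContDiff ℝ 1 f)
    (hsupp : HasCompactSupport f) (hb : Measurable b) (i : ι) {a s : ℝ} {M : ℝ≥0∞}
    (hs : 1 / 2 ≤ s) (hs' : s ≤ 1)
    (hM : ∀ x, eLpNorm (fun t => f (update (b x) i t)) 2 (volume.restrict (Ioi a)) ^ 2 ≤ M) :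
    (∫⁻ x, (⨆ t : Ioi a, ‖f (update (b x) i t)‖ₑ) ^ (2 / s) ∂μ) ^ (s / 2) ≤
      2 ^ (1 / 2 : ℝ) * M ^ ((1 - s) / 2)
        * eLpNorm (fun p : X × ℝ => f (update (b p.1) i p.2)) 2
            (μ.prod (volume.restrict (Ioi a))) ^ ((2 * s - 1) / 2)
        * eLpNorm (fun p : X × ℝ => fderiv ℝ f (update (b p.1) i p.2) (Pi.single i 1)) 2
            (μ.prod (volume.restrict (Ioi a))) ^ (1 / 2 : ℝ) := by
  have hderiv (x : X) := deriv_comp_update (hf.differentiable one_ne_zero) (b x) i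
  have h := lintegral_iSup_Ioi_enorm_rpow_le (μ := μ) (a := a) (M := M)
    (G := fun x u => f (update (b x) i u)) hs hs'
    (fun x => hf.comp (contDiff_update 1 (b x) i))
    (fun x => hsupp.comp_isClosedEmbedding (isClosedEmbedding_update (b x) i))
    (aestronglyMeasurable_comp_update hf.continuous hb i _)
  simp only [hderiv] at h
  exact h (aestronglyMeasurable_comp_update ((hf.continuous_fderiv one_ne_zero).clm_apply
    continuous_const) hb i _) hM

end CoordinateLines

theorem update_emb_zero (y : Fin 2 → ℝ) (t u : ℝ) : update (emb y t) 0 u = emb ![u, y 1] t := by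
  ext i
  fin_cases i <;> rfl

theorem update_emb_one (y : Fin 2 → ℝ) (t v : ℝ) : update (emb y t) 1 v = emb ![y 0, v] t := by
  ext i
  fin_cases i <;> rfl

theorem update_emb_two (y : Fin 2 → ℝ) (t t' : ℝ) : update (emb y t) 2 t' = emb y t' := by
  ext i
  fin_cases i <;> rfl

/-- Lebesgue measure on the half-line `x₃ > 0`. -/
noncomputable abbrev volumeIoi : Measure ℝ := volume.restrict (Ioi 0)

/-- Lebesgue measure on the half-space `x₃ > 0`. -/
noncomputable abbrev volumeH3 : Measure (Fin 3 → ℝ) := volume.restrict H3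

theorem measurePreserving_emb :
    MeasurePreserving (fun p : (Fin 2 → ℝ) × ℝ => emb p.1 p.2) (volume.prod volumeIoi)
      volumeH3 := by
  have hH3 : MeasurableSet H3 := measurableSet_lt measurable_const (measurable_pi_apply 2)
  have hemb_eq : (fun p : (Fin 2 → ℝ) × ℝ => emb p.1 p.2) =
      (MeasurableEquiv.piFinSuccAbove (fun _ : Fin 3 => ℝ) (Fin.last 2)).symm ∘ Prod.swap := by
    ext p i
    fin_cases i <;> rfl
  have hpreimage : (fun p : (Fin 2 → ℝ) × ℝ => emb p.1 p.2) ⁻¹' H3 = univ ×ˢ Ioi 0 := by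
    ext p
    simp [H3, emb]
  have hemb : MeasurePreserving (fun p : (Fin 2 → ℝ) × ℝ => emb p.1 p.2)
      (volume.prod volume) volume := by
    rw [hemb_eq]
    exact (volume_preserving_piFinSuccAbove (fun _ : Fin 3 => ℝ) (Fin.last 2)).symm.comp
      Measure.measurePreserving_swap
  have h := hemb.restrict_preimage hH3
  rwa [hpreimage, ← Measure.prod_restrict, Measure.restrict_univ] at h

theorem measurePreserving_emb_cons :
    MeasurePreserving (fun p : (ℝ × ℝ) × ℝ => emb ![p.2, p.1.2] p.1.1)
      ((volumeIoi.prod volume).prod volume) volumeH3 :=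
  measurePreserving_emb.comp <|
    (((volume_preserving_finTwoArrow ℝ).symm.comp Measure.measurePreserving_swap).prod
      (MeasurePreserving.id volumeIoi)).comp <|
    Measure.measurePreserving_swap.comp (measurePreserving_prodAssoc volumeIoi volume volume)

section HalfSpace

variable {f : (Fin 3 → ℝ) → ℝ}

theorem contDiff_pd {m n : WithTop ℕ∞} (hf : ContDiff ℝ n f) (hmn : m + 1 ≤ n) (i : Fin 3) :
    ContDiff ℝ m (pd i f) :=
  (hf.fderiv_right hmn).clm_apply contDiff_const

theorem hasCompactSupport_pd (hf : HasCompactSupport f) (i : Fin 3) :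
    HasCompactSupport (pd i f) :=
  hf.fderiv_apply ℝ _

theorem L2_nonneg (f : (Fin 3 → ℝ) → ℝ) : 0 ≤ L2 f :=
  Real.sqrt_nonneg _

theorem eLpNorm_eq_ofReal_L2 (hf : Continuous f) (hsupp : HasCompactSupport f) :
    eLpNorm f 2 volumeH3 = .ofReal (L2 f) := by
  have hmem : MemLp f 2 volumeH3 := hf.memLp_of_hasCompactSupport hsupp
  rw [hmem.eLpNorm_eq_integral_rpow_norm two_ne_zero ENNReal.ofNat_ne_top, L2, Real.sqrt_eq_rpow]
  simp

theorem eLpNorm_comp_emb (hf : Continuous f) :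
    eLpNorm (fun p : (Fin 2 → ℝ) × ℝ => f (emb p.1 p.2)) 2 (volume.prod volumeIoi) =
      eLpNorm f 2 volumeH3 :=
  eLpNorm_comp_measurePreserving hf.aestronglyMeasurable measurePreserving_emb

theorem eLpNorm_comp_emb_cons (hf : Continuous f) :
    eLpNorm (fun p : (ℝ × ℝ) × ℝ => f (emb ![p.2, p.1.2] p.1.1)) 2
      ((volumeIoi.prod volume).prod volume) = eLpNorm f 2 volumeH3 :=
  eLpNorm_comp_measurePreserving hf.aestronglyMeasurable measurePreserving_emb_cons

theorem eLpNorm_plane_sq_le (hf : ContDiff ℝ 1 f) (hsupp : HasCompactSupport f) (u : ℝ) :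
    eLpNorm (fun p : ℝ × ℝ => f (emb ![u, p.2] p.1)) 2 (volumeIoi.prod volume) ^ 2 ≤
      2 * (eLpNorm f 2 volumeH3 * eLpNorm (pd 0 f) 2 volumeH3) := by
  rw [← eLpNorm_comp_emb_cons hf.continuous,
    ← eLpNorm_comp_emb_cons (contDiff_pd hf (m := 0) (by simp) 0).continuous]
  have h := eLpNorm_comp_update_sq_le (μ := volumeIoi.prod volume)
    (b := fun p : ℝ × ℝ => emb ![0, p.2] p.1) hf hsupp (by unfold emb; fun_prop) 0 u
  simp only [update_emb_zero] at h
  exact h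

theorem eLpNorm_line_sq_le (hf : ContDiff ℝ 1 f) (hsupp : HasCompactSupport f) (u v : ℝ) :
    eLpNorm (fun t => f (emb ![u, v] t)) 2 volumeIoi ^ 2 ≤
      2 * (eLpNorm (fun p : ℝ × ℝ => f (emb ![u, p.2] p.1)) 2 (volumeIoi.prod volume) *
        eLpNorm (fun p : ℝ × ℝ => pd 1 f (emb ![u, p.2] p.1)) 2 (volumeIoi.prod volume)) := by
  have h := eLpNorm_comp_update_sq_le (μ := volumeIoi) (b := fun t => emb ![u, 0] t)
    hf hsupp (by unfold emb; fun_prop) 1 v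
  simp only [update_emb_one] at h
  exact h

theorem eLpNorm_vertical_sq_le (hf : ContDiff ℝ 2 f) (hsupp : HasCompactSupport f)
    (y : Fin 2 → ℝ) :
    eLpNorm (fun t => f (emb y t)) 2 volumeIoi ^ 2 ≤
      2 * (eLpNorm f 2 volumeH3 * eLpNorm (pd 1 f) 2 volumeH3 +
        eLpNorm (pd 0 f) 2 volumeH3 * eLpNorm (pd 0 (pd 1 f)) 2 volumeH3) := by
  have hf₁ : ContDiff ℝ 1 f := hf.of_le one_le_two
  have hline := eLpNorm_line_sq_le hf₁ hsupp (y 0) (y 1)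
  have hplane := eLpNorm_plane_sq_le hf₁ hsupp (y 0)
  have hplane_pd := eLpNorm_plane_sq_le (contDiff_pd hf one_add_one_eq_two.le 1)
    (hasCompactSupport_pd hsupp 1) (y 0)
  rw [show ![y 0, y 1] = y from FinVec.etaExpand_eq y] at hline
  refine hline.trans (mul_le_mul_right ?_ 2)
  rw [← ENNReal.pow_le_pow_left_iff two_ne_zero, mul_pow]
  calc _ ≤ _ := mul_le_mul' hplane hplane_pd
    _ = 4 * ((eLpNorm f 2 volumeH3 * eLpNorm (pd 1 f) 2 volumeH3) *
        (eLpNorm (pd 0 f) 2 volumeH3 * eLpNorm (pd 0 (pd 1 f)) 2 volumeH3)) := by ring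
    _ ≤ _ := ennreal_four_mul_le_add_sq _ _

theorem lintegral_iSup_enorm_comp_emb_rpow_le {s : ℝ} (hs : 1 / 2 ≤ s) (hs' : s ≤ 1)
    (hf : ContDiff ℝ 2 f) (hsupp : HasCompactSupport f) :
    (∫⁻ y, (⨆ t : Ioi (0 : ℝ), ‖f (emb y t)‖ₑ) ^ (2 / s)) ^ (s / 2) ≤
      2 ^ (1 / 2 : ℝ) * (2 * (eLpNorm f 2 volumeH3 * eLpNorm (pd 1 f) 2 volumeH3 +
          eLpNorm (pd 0 f) 2 volumeH3 * eLpNorm (pd 0 (pd 1 f)) 2 volumeH3)) ^ ((1 - s) / 2)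
        * eLpNorm f 2 volumeH3 ^ ((2 * s - 1) / 2)
        * eLpNorm (pd 2 f) 2 volumeH3 ^ (1 / 2 : ℝ) := by
  have hf₁ : ContDiff ℝ 1 f := hf.of_le one_le_two
  rw [← eLpNorm_comp_emb (contDiff_pd hf₁ (m := 0) (by simp) 2).continuous]
  nth_rw 2 [← eLpNorm_comp_emb hf.continuous]
  have hM (y : Fin 2 → ℝ) := eLpNorm_vertical_sq_le hf hsupp y
  have h := lintegral_iSup_Ioi_enorm_comp_update_rpow_le (μ := volume) (b := (emb · 0)) hf₁ hsupp
    (by unfold emb; fun_prop) 2 hs hs' (by simpa only [update_emb_two] using hM)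
  simp only [update_emb_two] at h
  exact h

end HalfSpace

theorem ofReal_two_rpow_mul_rpow_mul_rpow {s K A B : ℝ} (hs : 1 / 2 ≤ s) (hs' : s ≤ 1)
    (hK : 0 ≤ K) (hA : 0 ≤ A) (hB : 0 ≤ B) :
    ENNReal.ofReal (2 ^ (1 - s / 2) * K ^ ((1 - s) / 2) * A ^ ((2 * s - 1) / 2) * B ^ (1 / 2 : ℝ)) =
      2 ^ (1 / 2 : ℝ) * (2 * .ofReal K) ^ ((1 - s) / 2) * .ofReal A ^ ((2 * s - 1) / 2) *
        .ofReal B ^ (1 / 2 : ℝ) := by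
  have hK_exp : 0 ≤ (1 - s) / 2 := by linarith
  have hA_exp : 0 ≤ (2 * s - 1) / 2 := by linarith
  have hconst : (2 : ℝ) ^ (1 - s / 2) = 2 ^ (1 / 2 : ℝ) * 2 ^ ((1 - s) / 2) := by
    rw [← Real.rpow_add two_pos]
    ring_nf
  rw [hconst, mul_assoc (2 ^ (1 / 2 : ℝ)), ← Real.mul_rpow zero_le_two hK]
  simp (disch := positivity) only [ENNReal.ofReal_mul, ← ENNReal.ofReal_rpow_of_nonneg,
    ENNReal.ofReal_ofNat]

theorem mixed_norm_anisotropic_general {s : ℝ} (hs : 1 / 2 ≤ s) (hs' : s ≤ 1)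
    {f : (Fin 3 → ℝ) → ℝ} (hf : ContDiff ℝ 2 f) (hsupp : HasCompactSupport f) :
    (∫ y : Fin 2 → ℝ, (⨆ t : Ioi (0 : ℝ), |f (emb y t)|) ^ (2 / s)) ^ (s / 2) ≤
      2 ^ (1 - s / 2) * (L2 f * L2 (pd 1 f) + L2 (pd 0 f) * L2 (pd 0 (pd 1 f))) ^ ((1 - s) / 2)
        * L2 f ^ ((2 * s - 1) / 2) * L2 (pd 2 f) ^ (1 / 2 : ℝ) := by
  have hpd (i : Fin 3) : ContDiff ℝ 1 (pd i f) := contDiff_pd hf one_add_one_eq_two.le i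
  have hpd_pd : Continuous (pd 0 (pd 1 f)) :=
    (contDiff_pd (hpd 1) (m := 0) (zero_add 1).le 0).continuous
  have hsupp_pd (i : Fin 3) : HasCompactSupport (pd i f) := hasCompactSupport_pd hsupp i
  have hK := add_nonneg (mul_nonneg (L2_nonneg f) (L2_nonneg (pd 1 f)))
    (mul_nonneg (L2_nonneg (pd 0 f)) (L2_nonneg (pd 0 (pd 1 f))))
  have h := lintegral_iSup_enorm_comp_emb_rpow_le hs hs' hf hsupp
  simp only [eLpNorm_eq_ofReal_L2 hf.continuous hsupp,
    eLpNorm_eq_ofReal_L2 (hpd _).continuous (hsupp_pd _),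
    eLpNorm_eq_ofReal_L2 hpd_pd (hasCompactSupport_pd (hsupp_pd 1) 0),
    ← ENNReal.ofReal_mul (L2_nonneg _),
    ← ENNReal.ofReal_add (mul_nonneg (L2_nonneg _) (L2_nonneg _))
      (mul_nonneg (L2_nonneg _) (L2_nonneg _))] at h
  rw [← ofReal_two_rpow_mul_rpow_mul_rpow hs hs' hK (L2_nonneg f) (L2_nonneg (pd 2 f))] at h
  refine rpow_integral_iSup_norm_rpow_le (g := fun y (t : Ioi (0 : ℝ)) => f (emb y t))
    (by linarith) ?_ h
  have hf_nonneg := L2_nonneg f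
  have hpd_nonneg := L2_nonneg (pd 2 f)
  positivity

/-- Mixed-norm anisotropic Sobolev inequality:
`‖‖f‖_{L^∞_{x₃}}‖_{L^{2/s}_{x_h}} ≲ (‖f‖‖∂₂f‖ + ‖∂₁f‖‖∂₁∂₂f‖)^{(1-s)/2} ‖f‖^{(2s-1)/2} ‖∂₃f‖^{1/2}`. -/
theorem mixed_norm_anisotropic (s : ℝ) (hs1 : 1/2 < s) (hs2 : s < 1) :
    ∃ C : ℝ, 0 < C ∧ ∀ f : (Fin 3 → ℝ) → ℝ,
      ContDiff ℝ (⊤ : ℕ∞) f → HasCompactSupport f →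
      (∫ y : Fin 2 → ℝ, (⨆ t : Set.Ioi (0:ℝ), |f (emb y (t : ℝ))|) ^ ((2:ℝ)/s)) ^ (s/2) ≤
        C * (L2 f * L2 (pd 1 f) + L2 (pd 0 f) * L2 (pd 0 (pd 1 f))) ^ ((1 - s)/2)
          * L2 f ^ ((2*s - 1)/2) * L2 (pd 2 f) ^ ((1:ℝ)/2) :=
  ⟨2 ^ (1 - s / 2), by positivity, fun _ hf hsupp =>
    mixed_norm_anisotropic_general hs1.le hs2.le (contDiff_infty.1 hf 2) hsupp⟩
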